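/- arXiv:2603.03869 — 4 statements merged into one kernel-verified Lean document; each statement's English description precedes it below -/
import Mathlib

section
/- There exists a universal constant C > 0 such that for every d ≥ 1, every a < b, and every map γ : [a,b] → ℝ^d (Euclidean norm), Var_γ ≤ C √d · LVar_γ. In particular, LCJ(ℝ^d) ≥ C^{-1} d^{-1/2}. -/
/-!
The proof averages over the `2 ^ d` linear functionals `x ↦ (∑ i, ε i * x i) / √d` with signs
`ε i = ±1`. Each is 1-Lipschitz by Cauchy–Schwarz (`signFunctional_lipschitz`), so each of them
contributes at most `LVar γ`. On the other hand, Khintchine's `L¹` inequality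
(`khintchine`) says that the average over `ε` of `|∑ i, ε i * x i|` is at least `‖x‖ / 2`, so a
partition sum of `γ` is at most `2 √d` times the average of the corresponding sums of
`signFunctional ε ∘ γ`. This gives the constant `C = 2`.

Khintchine's inequality follows from the second moment `‖x‖²` and the bound `3 ‖x‖⁴` on the fourth
moment, both proved by induction on `d`, together with the polynomial inequality
`3 u² - u⁴ ≤ 2 |u|`.
-/

open Set ENNReal

/-- The total variation of `γ` on `[a, b]`:
the supremum over all finite partitions `a = t₀ < t₁ < ⋯ < t_N = b` of
`∑ ρ(γ(t_{i-1}), γ(t_i))`, valued in `[0, ∞]`. -/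
noncomputable def Var {M : Type*} [PseudoEMetricSpace M] (a b : ℝ) (γ : ℝ → M) : ℝ≥0∞ :=
  eVariationOn γ (Set.Icc a b)

/-- The Lipschitz variation of `γ` on `[a, b]`:
`LVar γ = sup { Var (f ∘ γ) : f : M → ℝ is 1-Lipschitz }`. -/
noncomputable def LVar {M : Type*} [PseudoEMetricSpace M] (a b : ℝ) (γ : ℝ → M) : ℝ≥0∞ :=
  ⨆ f : {f : M → ℝ // LipschitzWith 1 f}, Var a b (f.1 ∘ γ)

/-- `LCJ M = inf { LVar γ / Var γ : γ : [a,b] → M, a < b, 0 < Var γ < ∞ }`. -/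
noncomputable def LCJ (M : Type*) [PseudoEMetricSpace M] : ℝ≥0∞ :=
  ⨅ (a : ℝ) (b : ℝ) (_ : a < b) (γ : ℝ → M) (_ : 0 < Var a b γ) (_ : Var a b γ < ⊤),
    LVar a b γ / Var a b γ

/-- The sign `1` or `-1` encoded by a Boolean. -/
def sgn (b : Bool) : ℝ := if b then 1 else -1

lemma sgn_sq (b : Bool) : sgn b ^ 2 = 1 := by cases b <;> norm_num [sgn]

/-- The signed sum `∑ i, ε i * x i`. -/
def signSum {d : ℕ} (ε : Fin d → Bool) (x : Fin d → ℝ) : ℝ := ∑ i, sgn (ε i) * x i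

/-- Splitting a sum over sign patterns according to the first sign. -/
lemma sum_signSum_succ (d : ℕ) (x : Fin (d + 1) → ℝ) (F : ℝ → ℝ) :
    ∑ ε : Fin (d + 1) → Bool, F (signSum ε x) =
      ∑ ε : Fin d → Bool,
        (F (signSum ε (fun i => x i.succ) + x 0) + F (signSum ε (fun i => x i.succ) - x 0)) := by
  rw [← (Fin.consEquiv (fun _ : Fin (d + 1) => Bool)).sum_comp, Fintype.sum_prod_type,
    Fintype.sum_bool, ← Finset.sum_add_distrib]
  refine Finset.sum_congr rfl fun ε _ => ?_
  simp [signSum, Fin.consEquiv, Fin.sum_univ_succ, sgn, add_comm, sub_eq_add_neg]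

lemma sum_signSum_sq (d : ℕ) (x : Fin d → ℝ) :
    ∑ ε : Fin d → Bool, signSum ε x ^ 2 = 2 ^ d * ∑ i, x i ^ 2 := by
  induction d with
  | zero => simp [signSum]
  | succ d ih =>
    rw [sum_signSum_succ d x (fun s => s ^ 2), Fin.sum_univ_succ]
    have h : ∀ ε : Fin d → Bool,
        (signSum ε (fun i => x i.succ) + x 0) ^ 2 + (signSum ε (fun i => x i.succ) - x 0) ^ 2
          = 2 * signSum ε (fun i => x i.succ) ^ 2 + 2 * x 0 ^ 2 := fun ε => by ring
    simp only [h, Finset.sum_add_distrib, ← Finset.mul_sum, ih]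
    simp
    ring

lemma sum_signSum_pow_four (d : ℕ) (x : Fin d → ℝ) :
    ∑ ε : Fin d → Bool, signSum ε x ^ 4 ≤ 2 ^ d * (3 * (∑ i, x i ^ 2) ^ 2) := by
  induction d with
  | zero => simp [signSum]
  | succ d ih =>
    rw [sum_signSum_succ d x (fun s => s ^ 4), Fin.sum_univ_succ]
    have h : ∀ ε : Fin d → Bool,
        (signSum ε (fun i => x i.succ) + x 0) ^ 4 + (signSum ε (fun i => x i.succ) - x 0) ^ 4
          = 2 * signSum ε (fun i => x i.succ) ^ 4
            + 12 * x 0 ^ 2 * signSum ε (fun i => x i.succ) ^ 2 + 2 * x 0 ^ 4 := fun ε => by ring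
    simp only [h, Finset.sum_add_distrib, ← Finset.mul_sum, sum_signSum_sq]
    have hi := ih (fun i => x i.succ)
    have h0 : (0 : ℝ) ≤ 2 ^ d * x 0 ^ 4 := by positivity
    simp only [Finset.sum_const, Finset.card_univ, Fintype.card_pi, Fintype.card_bool,
      Finset.prod_const, Fintype.card_fin, nsmul_eq_mul, Nat.cast_pow, Nat.cast_ofNat]
    rw [pow_succ (2 : ℝ) d]
    nlinarith

/-- Khintchine's inequality in `L¹`, with constant `1 / 2`. -/
lemma khintchine (d : ℕ) (x : EuclideanSpace ℝ (Fin d)) :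
    2 ^ d * ‖x‖ ≤ 2 * ∑ ε : Fin d → Bool, |signSum ε x| := by
  rcases eq_or_ne x 0 with rfl | hx
  · simp only [norm_zero, mul_zero]
    positivity
  have hr : 0 < ‖x‖ := norm_pos_iff.mpr hx
  have hn : ‖x‖ ^ 2 = ∑ i, x i ^ 2 := EuclideanSpace.real_norm_sq_eq x
  -- This is `3 u² - u⁴ ≤ 2 u` at `u = |s| / (2 ‖x‖)`, cleared of denominators.
  have key : ∀ s : ℝ, 12 * ‖x‖ ^ 2 * s ^ 2 - s ^ 4 ≤ 16 * ‖x‖ ^ 3 * |s| := by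
    intro s
    have h1 : s ^ 2 = |s| ^ 2 := (sq_abs s).symm
    have h2 : s ^ 4 = |s| ^ 4 := by
      rw [show s ^ 4 = (s ^ 2) ^ 2 by ring, h1]; ring
    rw [h1, h2]
    have h3 : 0 ≤ |s| * (|s| - 2 * ‖x‖) ^ 2 * (|s| + 4 * ‖x‖) := by positivity
    linarith [h3, show |s| * (|s| - 2 * ‖x‖) ^ 2 * (|s| + 4 * ‖x‖)
      = |s| ^ 4 - 12 * ‖x‖ ^ 2 * |s| ^ 2 + 16 * ‖x‖ ^ 3 * |s| by ring]
  have hsum := Finset.sum_le_sum fun (ε : Fin d → Bool) (_ : ε ∈ Finset.univ) =>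
    key (signSum ε x)
  rw [Finset.sum_sub_distrib, ← Finset.mul_sum, ← Finset.mul_sum, sum_signSum_sq, ← hn] at hsum
  have h4 := sum_signSum_pow_four d x
  rw [← hn] at h4
  have h5 : 8 * ‖x‖ ^ 3 * (2 ^ d * ‖x‖)
      ≤ 8 * ‖x‖ ^ 3 * (2 * ∑ ε : Fin d → Bool, |signSum ε x|) := by
    have : (0 : ℝ) ≤ 2 ^ d * ‖x‖ ^ 4 := by positivity
    nlinarith
  exact le_of_mul_le_mul_left h5 (by positivity)

/-- The normalized sign functional `x ↦ (∑ i, ε i * x i) / √d` on `ℝ^d`. -/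
noncomputable def signFunctional {d : ℕ} (ε : Fin d → Bool) (x : EuclideanSpace ℝ (Fin d)) : ℝ :=
  signSum ε x / Real.sqrt d

lemma signSum_sub {d : ℕ} (ε : Fin d → Bool) (x y : EuclideanSpace ℝ (Fin d)) :
    signSum ε (x - y).ofLp = signSum ε x - signSum ε y := by
  simp [signSum, mul_sub, Finset.sum_sub_distrib]

lemma dist_signFunctional {d : ℕ} (ε : Fin d → Bool) (x y : EuclideanSpace ℝ (Fin d)) :
    dist (signFunctional ε x) (signFunctional ε y) = |signSum ε (x - y).ofLp| / Real.sqrt d := by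
  rw [Real.dist_eq, signFunctional, signFunctional, ← sub_div, signSum_sub, abs_div,
    abs_of_nonneg (Real.sqrt_nonneg _)]

lemma signFunctional_lipschitz {d : ℕ} (hd : 1 ≤ d) (ε : Fin d → Bool) :
    LipschitzWith 1 (signFunctional ε) := by
  refine LipschitzWith.of_dist_le_mul fun x y => ?_
  have hd' : (0 : ℝ) < d := by exact_mod_cast hd
  rw [dist_signFunctional, div_le_iff₀ (Real.sqrt_pos.mpr hd'), dist_eq_norm, NNReal.coe_one,
    one_mul]
  refine abs_le_of_sq_le_sq ?_ (by positivity)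
  rw [mul_pow, Real.sq_sqrt hd'.le, EuclideanSpace.real_norm_sq_eq]
  have h := Finset.sum_mul_sq_le_sq_mul_sq Finset.univ (fun i => sgn (ε i)) (fun i => (x - y) i)
  simp only [sgn_sq, Finset.sum_const, Finset.card_univ, Fintype.card_fin, nsmul_eq_mul,
    mul_one] at h
  rw [mul_comm]
  exact h

/-- Distances in `ℝ^d` are at most `2 √d` times the average distance between the images under the
sign functionals. -/
lemma edist_le_sum_signFunctional {d : ℕ} (hd : 1 ≤ d) (x y : EuclideanSpace ℝ (Fin d)) :
    edist x y ≤ ENNReal.ofReal (2 * Real.sqrt d / 2 ^ d) *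
      ∑ ε : Fin d → Bool, edist (signFunctional ε x) (signFunctional ε y) := by
  have hd' : (0 : ℝ) < d := by exact_mod_cast hd
  have hs := Real.sqrt_pos.mpr hd'
  simp only [edist_dist]
  rw [← ENNReal.ofReal_sum_of_nonneg (fun _ _ => dist_nonneg),
    ← ENNReal.ofReal_mul (by positivity)]
  apply ENNReal.ofReal_le_ofReal
  simp only [dist_signFunctional]
  rw [← Finset.sum_div, dist_eq_norm]
  have h := khintchine d (x - y)
  have h2 : (0 : ℝ) < 2 ^ d := by positivity
  calc ‖x - y‖ ≤ (2 * ∑ ε : Fin d → Bool, |signSum ε (x - y).ofLp|) / 2 ^ d := by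
        rw [le_div_iff₀ h2]; linarith
    _ = _ := by field_simp

lemma var_le_two_sqrt_mul_lvar {d : ℕ} (hd : 1 ≤ d) (a b : ℝ)
    (γ : ℝ → EuclideanSpace ℝ (Fin d)) :
    Var a b γ ≤ ENNReal.ofReal (2 * Real.sqrt d) * LVar a b γ := by
  refine iSup_le fun p => ?_
  calc ∑ i ∈ Finset.range p.1, edist (γ (p.2.1 (i + 1))) (γ (p.2.1 i))
      ≤ ∑ i ∈ Finset.range p.1, ENNReal.ofReal (2 * Real.sqrt d / 2 ^ d) *
          ∑ ε : Fin d → Bool, edist (signFunctional ε (γ (p.2.1 (i + 1))))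
            (signFunctional ε (γ (p.2.1 i))) :=
        Finset.sum_le_sum fun i _ => edist_le_sum_signFunctional hd _ _
    _ = ENNReal.ofReal (2 * Real.sqrt d / 2 ^ d) * ∑ ε : Fin d → Bool,
          ∑ i ∈ Finset.range p.1, edist ((signFunctional ε ∘ γ) (p.2.1 (i + 1)))
            ((signFunctional ε ∘ γ) (p.2.1 i)) := by
        rw [← Finset.mul_sum, Finset.sum_comm]; rfl
    _ ≤ ENNReal.ofReal (2 * Real.sqrt d / 2 ^ d) * ∑ _ε : Fin d → Bool, LVar a b γ := by
        gcongr with ε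
        exact (le_iSup (fun p : ℕ × { u : ℕ → ℝ // Monotone u ∧ ∀ i, u i ∈ Set.Icc a b } =>
          ∑ i ∈ Finset.range p.1, edist ((signFunctional ε ∘ γ) (p.2.1 (i + 1)))
            ((signFunctional ε ∘ γ) (p.2.1 i))) p).trans
          (le_iSup (fun f : {f : EuclideanSpace ℝ (Fin d) → ℝ // LipschitzWith 1 f} =>
            Var a b (f.1 ∘ γ)) ⟨signFunctional ε, signFunctional_lipschitz hd ε⟩)
    _ = ENNReal.ofReal (2 * Real.sqrt d) * LVar a b γ := by
        have h : ((2 ^ d : ℕ) : ℝ≥0∞) = ENNReal.ofReal (2 ^ d) := by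
          rw [← ENNReal.ofReal_natCast]; push_cast; rfl
        rw [Finset.sum_const, Finset.card_univ, Fintype.card_fun, Fintype.card_bool,
          Fintype.card_fin, nsmul_eq_mul, h, ← mul_assoc, ← ENNReal.ofReal_mul (by positivity),
          div_mul_cancel₀ _ (by positivity)]

/-- There is a universal constant `C > 0` such that for every `d ≥ 1` and every map
`γ : [a,b] → ℝ^d`, `Var γ ≤ C √d ⬝ LVar γ`; in particular
`LCJ(ℝ^d) ≥ C⁻¹ d^{-1/2}`. -/
theorem var_le_sqrt_dim_mul_lvar : ∃ C : ℝ, 0 < C ∧ ∀ d : ℕ, 1 ≤ d →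
    (∀ (a b : ℝ), a < b → ∀ γ : ℝ → EuclideanSpace ℝ (Fin d),
      Var a b γ ≤ ENNReal.ofReal (C * Real.sqrt d) * LVar a b γ) ∧
    ENNReal.ofReal (C⁻¹ / Real.sqrt d) ≤ LCJ (EuclideanSpace ℝ (Fin d)) := by
  refine ⟨2, by norm_num, fun d hd => ⟨fun a b _ γ => var_le_two_sqrt_mul_lvar hd a b γ, ?_⟩⟩
  refine le_iInf fun a => le_iInf fun b => le_iInf fun _ => le_iInf fun γ => le_iInf fun h0 =>
    le_iInf fun h1 => ?_
  have hs : (0 : ℝ) < Real.sqrt d := Real.sqrt_pos.mpr (by exact_mod_cast hd)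
  rw [ENNReal.le_div_iff_mul_le (Or.inl h0.ne') (Or.inl h1.ne)]
  calc ENNReal.ofReal (2⁻¹ / Real.sqrt d) * Var a b γ
      ≤ ENNReal.ofReal (2⁻¹ / Real.sqrt d) * (ENNReal.ofReal (2 * Real.sqrt d) * LVar a b γ) := by
        gcongr
        exact var_le_two_sqrt_mul_lvar hd a b γ
    _ = LVar a b γ := by
        rw [← mul_assoc, ← ENNReal.ofReal_mul (by positivity),
          show 2⁻¹ / Real.sqrt d * (2 * Real.sqrt d) = 1 by field_simp, ENNReal.ofReal_one,
          one_mul]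
end

section
/- For any metric space (M, ρ), LCJ_seq(M) = LCJ(M), where LCJ_seq(M) is the infimum of LVar(x̄, ȳ)/Var(x̄, ȳ) over all pairs of finite sequences x̄ = (x_1,…,x_N), ȳ = (y_1,…,y_N) in M with x̄ ≠ ȳ, with Var(x̄, ȳ) = ∑_{n=1}^N ρ(x_n, y_n) and LVar(x̄, ȳ) = sup { ∑_{n=1}^N |f(x_n) − f(y_n)| : f : M → ℝ is 1-Lipschitz }. -/
/-!
A curve yields pairs of sequences by sampling: along any partition, put `x_i = γ(t_i)` and
`y_i = γ(t_{i+1})`. Then `LVar(x̄, ȳ) ≤ LVar γ`, while the supremum of `Var(x̄, ȳ)` over partitions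
is `Var γ`; this gives `LCJseq ≤ LCJ`.

Conversely, given `x̄ ≠ ȳ`, take the step curve that oscillates `k + 1` times between `x_0` and
`y_0`, then `k + 1` times between `x_1` and `y_1`, and so on (`zigzag`). Its variation, after
composition with any map, is `2k + 1` times that of the pair `(x̄, ȳ)`, plus the cost of the jumps
`y_i → x_{i+1}` (`sum_edist_zigzag`). The jump cost is bounded independently of `k`, so it
disappears from the quotient `LVar / Var` as `k → ∞`.
-/

open Set ENNReal

/-- `LCJ_seq M`: the infimum of `LVar(x̄,ȳ)/Var(x̄,ȳ)` over all pairs of finite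
sequences `x̄ ≠ ȳ` in `M`, where `Var(x̄,ȳ) = ∑ ρ(x_n,y_n)` and
`LVar(x̄,ȳ) = sup { ∑ |f(x_n) - f(y_n)| : f 1-Lipschitz }`. -/
noncomputable def LCJseq (M : Type*) [PseudoEMetricSpace M] : ℝ≥0∞ :=
  ⨅ (n : ℕ) (x : Fin n → M) (y : Fin n → M) (_ : x ≠ y),
    (⨆ f : {f : M → ℝ // LipschitzWith 1 f},
        ∑ i, ENNReal.ofReal |f.1 (x i) - f.1 (y i)|) /
      ∑ i, edist (x i) (y i)

/-- The variation of a step function with values `u 0, u 1, …` at the integers. -/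
lemma Var_floor {E : Type*} [PseudoEMetricSpace E] (u : ℕ → E) (N : ℕ) :
    Var 0 (N : ℝ) (fun t => u ⌊t⌋₊) = ∑ i ∈ Finset.range N, edist (u i) (u (i + 1)) := by
  have himage : (fun t : ℝ => ⌊t⌋₊) '' Icc (0 : ℝ) N = Icc 0 N := by
    ext m
    constructor
    · rintro ⟨t, ht, rfl⟩
      exact ⟨Nat.zero_le _, Nat.floor_le_of_le ht.2⟩
    · rintro ⟨-, hm⟩
      exact ⟨m, ⟨Nat.cast_nonneg m, Nat.cast_le.2 hm⟩, Nat.floor_natCast m⟩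
  have hcomp := eVariationOn.comp_eq_of_monotoneOn u (t := Icc (0 : ℝ) N) (fun t : ℝ => ⌊t⌋₊)
    (Nat.floor_mono.monotoneOn _)
  rw [himage] at hcomp
  have hsum := eVariationOn.sum' u (I := fun i : ℕ => i) monotone_id (n := N)
  refine hcomp.trans (hsum.symm.trans (Finset.sum_congr rfl fun i _ => ?_))
  rw [← eVariationOn.pair]
  congr 1
  ext j
  simp only [mem_Icc, mem_insert_iff, mem_singleton_iff]
  omega

/-- The sequence `x_0, y_0, x_0, y_0, …, x_1, y_1, x_1, y_1, …` in which each pair `x_i, y_i` is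
repeated `k + 1` times. -/
def zigzag {E : Type*} (x y : ℕ → E) (k j : ℕ) : E :=
  if j % 2 = 0 then x (j / (2 * (k + 1))) else y (j / (2 * (k + 1)))

lemma comp_zigzag {E F : Type*} (g : E → F) (x y : ℕ → E) (k j : ℕ) :
    g (zigzag x y k j) = zigzag (g ∘ x) (g ∘ y) k j := by
  unfold zigzag
  split_ifs <;> rfl

/-- The value of `zigzag` at position `m` of block `i`. -/
lemma zigzag_block {E : Type*} (x y : ℕ → E) (k i m : ℕ) (hm : m < 2 * (k + 1)) :
    zigzag x y k (i * (2 * (k + 1)) + m) = if m % 2 = 0 then x i else y i := by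
  have hdiv : (i * (2 * (k + 1)) + m) / (2 * (k + 1)) = i := by
    rw [add_comm, Nat.add_mul_div_right _ _ (by omega), Nat.div_eq_of_lt hm, zero_add]
  have hmod : (i * (2 * (k + 1)) + m) % 2 = m % 2 := by
    rw [show i * (2 * (k + 1)) + m = m + 2 * (i * (k + 1)) by ring, Nat.add_mul_mod_self_left]
  rw [zigzag, hdiv, hmod]

lemma sum_edist_zigzag {E : Type*} [PseudoEMetricSpace E] (x y : ℕ → E) (k n : ℕ) :
    ∑ j ∈ Finset.range (n * (2 * (k + 1))), edist (zigzag x y k j) (zigzag x y k (j + 1)) =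
      (2 * k + 1 : ℕ) * ∑ i ∈ Finset.range n, edist (x i) (y i) +
        ∑ i ∈ Finset.range n, edist (y i) (x (i + 1)) := by
  induction n with
  | zero => simp
  | succ n ih =>
    have hinner : ∑ m ∈ Finset.range (2 * k + 1),
        edist (zigzag x y k (n * (2 * (k + 1)) + m)) (zigzag x y k (n * (2 * (k + 1)) + m + 1)) =
          (2 * k + 1 : ℕ) * edist (x n) (y n) := by
      rw [Finset.sum_congr rfl (g := fun _ => edist (x n) (y n)), Finset.sum_const,
        Finset.card_range, nsmul_eq_mul]
      intro m hm
      rw [Finset.mem_range] at hm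
      rw [add_assoc, zigzag_block x y k n m (by omega), zigzag_block x y k n (m + 1) (by omega)]
      rcases Nat.mod_two_eq_zero_or_one m with h | h
      · rw [if_pos h, if_neg (by omega)]
      · rw [if_neg (by omega), if_pos (by omega), edist_comm]
    have hjump : edist (zigzag x y k (n * (2 * (k + 1)) + (2 * k + 1)))
        (zigzag x y k (n * (2 * (k + 1)) + (2 * k + 1) + 1)) = edist (y n) (x (n + 1)) := by
      rw [show n * (2 * (k + 1)) + (2 * k + 1) + 1 = (n + 1) * (2 * (k + 1)) + 0 by ring,
        zigzag_block x y k n _ (by omega), zigzag_block x y k (n + 1) 0 (by omega),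
        if_neg (by omega), if_pos rfl]
    rw [add_mul, one_mul, Finset.sum_range_add, ih, show 2 * (k + 1) = 2 * k + 1 + 1 by ring,
      Finset.sum_range_succ (n := 2 * k + 1)]
    rw [show 2 * k + 1 + 1 = 2 * (k + 1) by ring, hinner, hjump, Finset.sum_range_succ,
      Finset.sum_range_succ, mul_add]
    ring

/-- A bounded error is negligible against arbitrarily large multiples. -/
lemma le_of_forall_odd_mul_le {A L C : ℝ≥0∞} (hC : C ≠ ⊤)
    (h : ∀ k : ℕ, (2 * k + 1 : ℕ) * A ≤ (2 * k + 1 : ℕ) * L + C) : A ≤ L := by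
  refine ENNReal.le_of_forall_pos_le_add fun ε hε _ => ?_
  obtain ⟨k, hk⟩ := ENNReal.exists_nat_mul_gt (a := (ε : ℝ≥0∞)) (b := C) (by simpa using hε.ne') hC
  have hp0 : ((2 * k + 1 : ℕ) : ℝ≥0∞) ≠ 0 := by exact Nat.cast_ne_zero.2 (Nat.succ_ne_zero (2 * k))
  have hkp : (k : ℝ≥0∞) ≤ (2 * k + 1 : ℕ) := by
    rw [Nat.cast_le]
    omega
  rw [← ENNReal.mul_le_mul_iff_right hp0 (ENNReal.natCast_ne_top _), mul_add]
  exact (h k).trans (by gcongr; exact hk.le.trans (by gcongr))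

/-- Sampling a curve along a partition. -/
lemma LCJseq_mul_Var_le {M : Type*} [MetricSpace M] (a b : ℝ) (γ : ℝ → M) :
    LCJseq M * Var a b γ ≤ LVar a b γ := by
  rw [Var, eVariationOn, ENNReal.mul_iSup]
  refine iSup_le ?_
  rintro ⟨n, t, ht, hts⟩
  dsimp only
  rw [Finset.sum_range (fun i => edist (γ (t (i + 1))) (γ (t i)))]
  by_cases hxy : (fun i : Fin n => γ (t (i + 1))) = fun i : Fin n => γ (t i)
  · have hzero : ∑ i : Fin n, edist (γ (t (i + 1))) (γ (t i)) = 0 :=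
      Finset.sum_eq_zero fun i _ => by rw [edist_eq_zero]; exact congrFun hxy i
    rw [hzero, mul_zero]
    exact zero_le
  · have hle : LCJseq M ≤ _ := iInf_le_of_le n <| iInf_le_of_le _ <| iInf_le_of_le _ <|
      iInf_le _ hxy
    refine ENNReal.mul_le_of_le_div (hle.trans ?_)
    refine ENNReal.div_le_div_right (iSup_mono fun f => ?_) _
    have hf := eVariationOn.sum_le (f := f.1 ∘ γ) (n := n) ht hts
    rw [Finset.sum_range (fun i => edist ((f.1 ∘ γ) (t (i + 1))) ((f.1 ∘ γ) (t i)))] at hf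
    simp only [edist_dist, Real.dist_eq, Function.comp_apply] at hf
    exact hf

/-- For a pair of sequences, `LCJ · Var(x̄, ȳ) ≤ LVar(x̄, ȳ)`; only the first `n` terms matter
for either side. -/
lemma LCJ_mul_sum_le {M : Type*} [MetricSpace M] (x y : ℕ → M) (n : ℕ)
    (hV : ∑ i ∈ Finset.range n, edist (x i) (y i) ≠ 0) :
    LCJ M * ∑ i ∈ Finset.range n, edist (x i) (y i) ≤
      ⨆ f : {f : M → ℝ // LipschitzWith 1 f},
        ∑ i ∈ Finset.range n, edist (f.1 (x i)) (f.1 (y i)) := by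
  have hC : ∑ i ∈ Finset.range n, edist (y i) (x (i + 1)) ≠ ⊤ :=
    ENNReal.sum_ne_top.2 fun i _ => edist_ne_top _ _
  have hVtop : ∑ i ∈ Finset.range n, edist (x i) (y i) ≠ ⊤ :=
    ENNReal.sum_ne_top.2 fun i _ => edist_ne_top _ _
  refine le_of_forall_odd_mul_le hC fun k => ?_
  have hn : 0 < n := Nat.pos_of_ne_zero (by rintro rfl; simp at hV)
  set N := n * (2 * (k + 1)) with hN
  have hNpos : (0 : ℝ) < N := by rw [hN]; exact_mod_cast (by positivity)
  set γ : ℝ → M := fun t => zigzag x y k ⌊t⌋₊ with hγ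
  have hVar : Var 0 (N : ℝ) γ = (2 * k + 1 : ℕ) * ∑ i ∈ Finset.range n, edist (x i) (y i) +
      ∑ i ∈ Finset.range n, edist (y i) (x (i + 1)) := by
    rw [hγ, Var_floor, sum_edist_zigzag]
  have hlow : (2 * k + 1 : ℕ) * ∑ i ∈ Finset.range n, edist (x i) (y i) ≤ Var 0 (N : ℝ) γ := by
    rw [hVar]
    exact le_self_add
  have hpos : 0 < Var 0 (N : ℝ) γ := by
    refine lt_of_lt_of_le (pos_iff_ne_zero.2 (mul_ne_zero ?_ hV)) hlow
    exact Nat.cast_ne_zero.2 (Nat.succ_ne_zero (2 * k))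
  have hfin : Var 0 (N : ℝ) γ < ⊤ := by
    rw [hVar]
    exact ENNReal.add_lt_top.2
      ⟨ENNReal.mul_lt_top (ENNReal.natCast_lt_top _) hVtop.lt_top, hC.lt_top⟩
  have hLCJ : LCJ M ≤ LVar 0 (N : ℝ) γ / Var 0 (N : ℝ) γ :=
    iInf_le_of_le 0 <| iInf_le_of_le (N : ℝ) <| iInf_le_of_le hNpos <| iInf_le_of_le γ <|
      iInf_le_of_le hpos <| iInf_le _ hfin
  have hLVar : LVar 0 (N : ℝ) γ ≤ (2 * k + 1 : ℕ) *
      (⨆ f : {f : M → ℝ // LipschitzWith 1 f},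
        ∑ i ∈ Finset.range n, edist (f.1 (x i)) (f.1 (y i))) +
      ∑ i ∈ Finset.range n, edist (y i) (x (i + 1)) := by
    refine iSup_le fun f => ?_
    have hcomp : f.1 ∘ γ = fun t : ℝ => zigzag (f.1 ∘ x) (f.1 ∘ y) k ⌊t⌋₊ :=
      funext fun t => comp_zigzag f.1 x y k _
    rw [hcomp, Var_floor, sum_edist_zigzag]
    refine add_le_add (mul_le_mul_right ?_ _) (Finset.sum_le_sum fun i _ => ?_)
    · exact le_iSup (fun f : {f : M → ℝ // LipschitzWith 1 f} =>
        ∑ i ∈ Finset.range n, edist (f.1 (x i)) (f.1 (y i))) f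
    · simpa using f.2 (y i) (x (i + 1))
  calc (2 * k + 1 : ℕ) * (LCJ M * ∑ i ∈ Finset.range n, edist (x i) (y i))
      = LCJ M * ((2 * k + 1 : ℕ) * ∑ i ∈ Finset.range n, edist (x i) (y i)) := by ring
    _ ≤ LCJ M * Var 0 (N : ℝ) γ := by gcongr
    _ ≤ LVar 0 (N : ℝ) γ := ENNReal.mul_le_of_le_div hLCJ
    _ ≤ _ := hLVar

/-- For any metric space `M`, `LCJ_seq M = LCJ M`. -/
theorem lcjseq_eq_lcj (M : Type*) [MetricSpace M] : LCJseq M = LCJ M := by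
  apply le_antisymm
  · refine le_iInf fun a => le_iInf fun b => le_iInf fun _ => le_iInf fun γ =>
      le_iInf fun hpos => le_iInf fun hfin => ?_
    rw [ENNReal.le_div_iff_mul_le (Or.inl hpos.ne') (Or.inl hfin.ne)]
    exact LCJseq_mul_Var_le a b γ
  · refine le_iInf fun n => le_iInf fun x => le_iInf fun y => le_iInf fun hxy => ?_
    obtain ⟨i₀, hi₀⟩ := Function.ne_iff.1 hxy
    have hV : ∑ i, edist (x i) (y i) ≠ 0 := fun h =>
      hi₀ (edist_eq_zero.1 (Finset.sum_eq_zero_iff.1 h i₀ (Finset.mem_univ _)))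
    have hVtop : ∑ i, edist (x i) (y i) ≠ ⊤ := ENNReal.sum_ne_top.2 fun i _ => edist_ne_top _ _
    rw [ENNReal.le_div_iff_mul_le (Or.inl hV) (Or.inl hVtop)]
    -- Extend both sequences to all of `ℕ`; the values beyond `n` are arbitrary.
    let x' : ℕ → M := fun i => if h : i < n then x ⟨i, h⟩ else x i₀
    let y' : ℕ → M := fun i => if h : i < n then y ⟨i, h⟩ else x i₀
    have hx' : ∀ i : Fin n, x' i = x i := fun i => by simp [x']
    have hy' : ∀ i : Fin n, y' i = y i := fun i => by simp [y']
    have key := LCJ_mul_sum_le x' y' n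
    simp only [Finset.sum_range, hx', hy'] at key
    simpa only [edist_dist, Real.dist_eq] using key hV
end

section
/- There exist constants C ≥ 1 and c > 0 with the following property. Let (M, ρ) be a separable metric space whose metric is an ultrametric and whose diameter is at most 1. Then there exist a probability space (Ω, ℱ, P) and a function Φ : Ω × M → ℝ such that: for every x ∈ M, the map ω ↦ Φ(ω, x) is measurable; for every ω ∈ Ω, the function x ↦ Φ(ω, x) is C-Lipschitz; and for all x, y ∈ M, E_ω |Φ(ω, x) − Φ(ω, y)| ≥ c · ρ(x, y). -/
/-!
For each scale `2⁻ᵏ` the closed balls of radius `2⁻ᵏ` partition the ultrametric space. Attach to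
every pair (scale, ball) an independent fair bit and set
`Φ(x) = ∑ₖ 2⁻ᵏ · bit(k, B(x, 2⁻ᵏ))`.

If `2⁻ᵏ⁻¹ < ρ(x,y) ≤ 2⁻ᵏ`, then `x` and `y` share their balls at the scales `0, …, k`, so
`|Φ(x) - Φ(y)| ≤ ∑_{j>k} 2⁻ʲ = 2⁻ᵏ ≤ 2 ρ(x,y)`. At scale `k + 1` their balls differ, and flipping
the bit of the ball of `x` at that scale preserves the measure (`measurePreserving_flip`), leaves
`Φ(y)` unchanged and moves `Φ(x)` by exactly `2⁻ᵏ⁻¹`. By the triangle inequality, the values of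
`|Φ(x) - Φ(y)|` before and after the flip add up to at least `2⁻ᵏ⁻¹`, whence
`E|Φ(x) - Φ(y)| ≥ 2⁻ᵏ⁻² ≥ ρ(x,y) / 4`.
-/

open MeasureTheory

namespace RandomLipschitz

/-- The law of a fair bit. -/
noncomputable def coin : Measure Bool :=
  (2⁻¹ : ENNReal) • (Measure.dirac true + Measure.dirac false)

instance : IsProbabilityMeasure coin := by
  constructor
  simp only [coin, Measure.smul_apply, Measure.add_apply, measure_univ, smul_eq_mul]
  rw [one_add_one_eq_two]
  exact ENNReal.inv_mul_cancel (by norm_num) (by norm_num)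

lemma coin_map_not : coin.map not = coin := by
  have hm : Measurable not := measurable_of_finite _
  rw [coin, Measure.map_smul, Measure.map_add _ _ hm, Measure.map_dirac' hm,
    Measure.map_dirac' hm, add_comm]
  rfl

/-- The law of a family of independent fair bits indexed by `I`. -/
noncomputable def coins (I : Type) : Measure (I → Bool) :=
  Measure.infinitePi fun _ : I => coin

instance (I : Type) : IsProbabilityMeasure (coins I) := by
  unfold coins; infer_instance

open Classical in
/-- Flip the bit with index `i`. -/
noncomputable def flip {I : Type} (i : I) (ω : I → Bool) : I → Bool :=
  fun j => (if j = i then not else id) (ω j)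

lemma flip_same {I : Type} (i : I) (ω : I → Bool) : flip i ω i = !(ω i) := by simp [flip]

lemma flip_ne {I : Type} {i j : I} (h : j ≠ i) (ω : I → Bool) : flip i ω j = ω j := by
  simp [flip, h]

lemma measurePreserving_flip {I : Type} (i : I) :
    MeasurePreserving (flip i) (coins I) (coins I) := by
  classical
  refine ⟨measurable_pi_lambda _ fun j =>
    (measurable_of_finite _).comp (measurable_pi_apply j), ?_⟩
  unfold coins flip
  rw [Measure.infinitePi_map_pi _ (fun _ => measurable_of_finite _)]
  congr 1
  funext j
  split_ifs
  · exact coin_map_not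
  · exact Measure.map_id

/-- The numerical value `0` or `1` of a bit. -/
def bit (b : Bool) : ℝ := if b then 1 else 0

lemma abs_bit_le (b : Bool) : |bit b| ≤ 1 := by cases b <;> simp [bit]

lemma abs_bit_sub_le (a b : Bool) : |bit a - bit b| ≤ 1 := by cases a <;> cases b <;> simp [bit]

lemma abs_bit_sub_not (b : Bool) : |bit b - bit (!b)| = 1 := by cases b <;> simp [bit]

variable {M : Type} [MetricSpace M]

/-- The label of the dyadic ball of `x` at scale `k`: the scale together with the closed ball of
radius `2⁻ᵏ` around `x`. -/
def label (k : ℕ) (x : M) : ℕ × Set M := (k, Metric.closedBall x ((1 / 2 : ℝ) ^ k))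

/-- The random function `Φ(x) = ∑ₖ 2⁻ᵏ · bit(k, B(x, 2⁻ᵏ))`. -/
noncomputable def field (ω : ℕ × Set M → Bool) (x : M) : ℝ :=
  ∑' k : ℕ, (1 / 2 : ℝ) ^ k * bit (ω (label k x))

lemma summable_field (ω : ℕ × Set M → Bool) (x : M) :
    Summable fun k : ℕ => (1 / 2 : ℝ) ^ k * bit (ω (label k x)) := by
  refine Summable.of_norm_bounded summable_geometric_two fun k => ?_
  rw [norm_mul, Real.norm_eq_abs, Real.norm_eq_abs, abs_of_nonneg (by positivity)]
  exact mul_le_of_le_one_right (by positivity) (abs_bit_le _)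

lemma measurable_field (x : M) : Measurable fun ω : ℕ × Set M → Bool => field ω x := by
  refine measurable_of_tendsto_metrizable
    (f := fun n ω => ∑ k ∈ Finset.range n, (1 / 2 : ℝ) ^ k * bit (ω (label k x)))
    (fun n => ?_) ?_
  · refine Finset.measurable_sum _ fun k _ => Measurable.const_mul ?_ _
    exact (measurable_of_finite bit).comp (measurable_pi_apply _)
  · exact tendsto_pi_nhds.2 fun ω => (summable_field ω x).hasSum.tendsto_sum_nat

lemma label_eq (hu : ∀ x y z : M, dist x z ≤ max (dist x y) (dist y z)) {x y : M} {k : ℕ}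
    (h : dist x y ≤ (1 / 2 : ℝ) ^ k) : label k x = label k y := by
  unfold label
  congr 1
  ext z
  simp only [Metric.mem_closedBall]
  exact ⟨fun hz => (hu z x y).trans (max_le hz h),
    fun hz => (hu z y x).trans (max_le hz (by rwa [dist_comm]))⟩

lemma label_ne {x y : M} {k j : ℕ} (h : (1 / 2 : ℝ) ^ k < dist x y) :
    label j y ≠ label k x := by
  intro he
  simp only [label, Prod.mk.injEq] at he
  obtain ⟨rfl, he⟩ := he
  have hy : y ∈ Metric.closedBall y ((1 / 2 : ℝ) ^ j) :=
    Metric.mem_closedBall_self (by positivity)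
  rw [he, Metric.mem_closedBall, dist_comm] at hy
  exact absurd hy (not_le.2 h)

/-- Points at distance at most `2⁻ᵏ` share their terms of index `0, …, k`, and the remaining tail
is at most `2⁻ᵏ`. -/
lemma abs_field_sub_le (hu : ∀ x y z : M, dist x z ≤ max (dist x y) (dist y z)) {x y : M} {k : ℕ}
    (h : dist x y ≤ (1 / 2 : ℝ) ^ k) (ω : ℕ × Set M → Bool) :
    |field ω x - field ω y| ≤ (1 / 2 : ℝ) ^ k := by
  have hs := (summable_field ω x).sub (summable_field ω y)
  unfold field
  rw [← (summable_field ω x).tsum_sub (summable_field ω y), ← hs.sum_add_tsum_nat_add (k + 1),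
    Finset.sum_eq_zero, zero_add]
  · have hg : HasSum (fun i : ℕ => (1 / 2 : ℝ) ^ (k + 1) * (1 / 2 : ℝ) ^ i) ((1 / 2 : ℝ) ^ k) := by
      have := hasSum_geometric_two.mul_left ((1 / 2 : ℝ) ^ (k + 1))
      rwa [pow_succ, mul_assoc, one_div_mul_cancel two_ne_zero, mul_one, ← pow_succ] at this
    rw [← Real.norm_eq_abs]
    refine tsum_of_norm_bounded hg fun i => ?_
    rw [← mul_sub, norm_mul, Real.norm_eq_abs, Real.norm_eq_abs, abs_of_nonneg (by positivity),
      ← pow_add, add_comm (k + 1) i]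
    exact mul_le_of_le_one_right (by positivity) (abs_bit_sub_le _ _)
  · intro j hj
    have hjk : j ≤ k := Nat.lt_succ_iff.1 (Finset.mem_range.1 hj)
    rw [label_eq hu (h.trans (pow_le_pow_of_le_one (by norm_num) (by norm_num) hjk)), sub_self]

lemma abs_field_sub_flip (x : M) (k : ℕ) (ω : ℕ × Set M → Bool) :
    |field ω x - field (flip (label k x) ω) x| = (1 / 2 : ℝ) ^ k := by
  unfold field
  rw [← (summable_field ω x).tsum_sub (summable_field _ x), tsum_eq_single k, ← mul_sub, abs_mul,
    flip_same, abs_bit_sub_not, mul_one, abs_of_nonneg (by positivity)]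
  intro j hj
  rw [flip_ne (fun he => hj (congrArg Prod.fst he)), sub_self]

lemma field_flip_of_lt {x y : M} {k : ℕ} (h : (1 / 2 : ℝ) ^ k < dist x y)
    (ω : ℕ × Set M → Bool) : field (flip (label k x) ω) y = field ω y := by
  unfold field
  exact tsum_congr fun j => by rw [flip_ne (label_ne h)]

/-- Averaging over a flip of the bit of the ball of `x` at a scale separating `x` from `y`. -/
lemma le_lintegral {x y : M} {k : ℕ} (h : (1 / 2 : ℝ) ^ k < dist x y) :
    ENNReal.ofReal ((1 / 2 : ℝ) ^ (k + 1)) ≤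
      ∫⁻ ω, ENNReal.ofReal |field ω x - field ω y| ∂(coins (ℕ × Set M)) := by
  set g : (ℕ × Set M → Bool) → ENNReal := fun ω => ENNReal.ofReal |field ω x - field ω y| with hg
  have hgm : Measurable g := by
    have := ((measurable_field x).sub (measurable_field y)).norm
    exact this.ennreal_ofReal
  have hflip : ∫⁻ ω, g (flip (label k x) ω) ∂(coins (ℕ × Set M)) = ∫⁻ ω, g ω ∂(coins _) :=
    (measurePreserving_flip _).lintegral_comp hgm
  have hpt : ∀ ω, ENNReal.ofReal ((1 / 2 : ℝ) ^ k) ≤ g ω + g (flip (label k x) ω) := by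
    intro ω
    rw [hg]
    dsimp only
    rw [← ENNReal.ofReal_add (abs_nonneg _) (abs_nonneg _), field_flip_of_lt h,
      ← abs_field_sub_flip x k ω]
    refine ENNReal.ofReal_le_ofReal ?_
    rw [abs_sub_comm (field (flip _ ω) x)]
    exact abs_sub_le _ _ _
  have hsum : ENNReal.ofReal ((1 / 2 : ℝ) ^ k) ≤ 2 * ∫⁻ ω, g ω ∂(coins (ℕ × Set M)) := by
    calc ENNReal.ofReal ((1 / 2 : ℝ) ^ k)
        = ∫⁻ _, ENNReal.ofReal ((1 / 2 : ℝ) ^ k) ∂(coins (ℕ × Set M)) := by simp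
      _ ≤ ∫⁻ ω, (g ω + g (flip (label k x) ω)) ∂(coins (ℕ × Set M)) := lintegral_mono hpt
      _ = 2 * ∫⁻ ω, g ω ∂(coins (ℕ × Set M)) := by
        rw [lintegral_add_left hgm, hflip, two_mul]
  have h2 : ENNReal.ofReal ((1 / 2 : ℝ) ^ k) = 2 * ENNReal.ofReal ((1 / 2 : ℝ) ^ (k + 1)) := by
    rw [← ENNReal.ofReal_ofNat 2, ← ENNReal.ofReal_mul (by norm_num)]
    congr 1
    ring
  rw [h2] at hsum
  exact (ENNReal.mul_le_mul_iff_right (by norm_num) (by norm_num)).1 hsum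

end RandomLipschitz

/-- There are constants `C ≥ 1` and `c > 0` such that on every separable ultrametric
space of diameter at most `1` there is a random `C`-Lipschitz function `Φ` with
`E|Φ(x) - Φ(y)| ≥ c ρ(x,y)` for all `x, y`. -/
theorem random_lipschitz_on_ultrametric : ∃ C : ℝ, 1 ≤ C ∧ ∃ c : ℝ, 0 < c ∧
    ∀ (M : Type) [MetricSpace M], TopologicalSpace.SeparableSpace M →
      (∀ x y z : M, dist x z ≤ max (dist x y) (dist y z)) →
      (∀ x y : M, dist x y ≤ 1) →
      ∃ (Ω : Type) (mΩ : MeasurableSpace Ω) (P : @Measure Ω mΩ),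
        IsProbabilityMeasure P ∧
        ∃ Φ : Ω → M → ℝ,
          (∀ x : M, @Measurable Ω ℝ mΩ _ (fun ω => Φ ω x)) ∧
          (∀ (ω : Ω) (x y : M), |Φ ω x - Φ ω y| ≤ C * dist x y) ∧
          (∀ x y : M,
            ENNReal.ofReal (c * dist x y) ≤ ∫⁻ ω, ENNReal.ofReal |Φ ω x - Φ ω y| ∂P) := by
  refine ⟨2, by norm_num, 1 / 4, by norm_num, ?_⟩
  intro M _ _ hu hd
  have hscale : ∀ x y : M, x ≠ y →
      ∃ k : ℕ, (1 / 2 : ℝ) ^ (k + 1) < dist x y ∧ dist x y ≤ (1 / 2 : ℝ) ^ k := fun x y hxy =>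
    exists_nat_pow_near_of_lt_one (dist_pos.2 hxy) (hd x y) (by norm_num) (by norm_num)
  refine ⟨ℕ × Set M → Bool, inferInstance, RandomLipschitz.coins _, inferInstance,
    RandomLipschitz.field, RandomLipschitz.measurable_field, fun ω x y => ?_, fun x y => ?_⟩
  · rcases eq_or_ne x y with rfl | hxy
    · simp
    obtain ⟨k, hk₁, hk₂⟩ := hscale x y hxy
    refine (RandomLipschitz.abs_field_sub_le hu hk₂ ω).trans ?_
    rw [pow_succ] at hk₁
    linarith
  · rcases eq_or_ne x y with rfl | hxy
    · simp
    obtain ⟨k, hk₁, hk₂⟩ := hscale x y hxy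
    refine (ENNReal.ofReal_le_ofReal ?_).trans (RandomLipschitz.le_lintegral hk₁)
    rw [pow_succ, pow_succ]
    linarith
end

section
/- Let (M, ρ) be a uniformly disconnected metric space, i.e., there is a constant c₀ ∈ (0,1) such that for each x ∈ M and r > 0 there exists a closed set A with B_{c₀ r}(x) ⊆ A ⊆ B_r(x) and dist(A, M ∖ A) ≥ c₀ r. Then there exist an ultrametric ρ' on M and a constant K ≥ 1 such that K^{-1} ρ'(x,y) ≤ ρ(x,y) ≤ K ρ'(x,y) for all x, y ∈ M. -/
/-!
The ultrametric is the chain (single-linkage) distance: `ρ' x y` is the infimum of the `ε ≥ 0`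
such that `x` and `y` are joined by a finite chain whose consecutive points are at distance at
most `ε`. Concatenating chains gives the ultrametric inequality, and the one-step chain gives
`ρ' ≤ dist`. Conversely, for `x ≠ y` put `r = dist x y / 2`. The separated set `A` around `x` at
scale `r` contains `x` but not `y`, so every chain from `x` to `y` has a step leaving `A`, of
length at least `c₀ * r`. Hence `dist x y ≤ (2 / c₀) * ρ' x y`, which is
`dist_le_of_mem_chainScales` below.
-/

/-- The scales `ε ≥ 0` for which `x` and `y` are joined by a finite chain of steps of length at
most `ε`. -/
def chainScales {M : Type*} [MetricSpace M] (x y : M) : Set ℝ :=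
  {ε | 0 ≤ ε ∧ Relation.ReflTransGen (fun a b : M => dist a b ≤ ε) x y}

/-- The chain distance: the infimum of the scales at which `x` and `y` are joined by a chain. -/
noncomputable def chainDist {M : Type*} [MetricSpace M] (x y : M) : ℝ :=
  sInf (chainScales x y)

section

variable {M : Type*} [MetricSpace M]

lemma dist_mem_chainScales (x y : M) : dist x y ∈ chainScales x y :=
  ⟨dist_nonneg, Relation.ReflTransGen.single le_rfl⟩

lemma bddBelow_chainScales (x y : M) : BddBelow (chainScales x y) :=
  ⟨0, fun _ hε => hε.1⟩

lemma chainDist_nonneg (x y : M) : 0 ≤ chainDist x y :=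
  Real.sInf_nonneg fun _ hε => hε.1

lemma chainDist_le_dist (x y : M) : chainDist x y ≤ dist x y :=
  csInf_le (bddBelow_chainScales x y) (dist_mem_chainScales x y)

lemma chainScales_subset_symm (x y : M) : chainScales x y ⊆ chainScales y x := by
  rintro ε ⟨h0, hε⟩
  have : Std.Symm (fun a b : M => dist a b ≤ ε) := ⟨fun a b hab => by rwa [dist_comm]⟩
  exact ⟨h0, Relation.ReflTransGen.stdSymm.symm _ _ hε⟩

lemma chainDist_comm (x y : M) : chainDist x y = chainDist y x :=
  congrArg sInf ((chainScales_subset_symm x y).antisymm (chainScales_subset_symm y x))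

lemma chainDist_le_max (x y z : M) :
    chainDist x z ≤ max (chainDist x y) (chainDist y z) := by
  refine le_of_forall_gt_imp_ge_of_dense fun e he => ?_
  obtain ⟨ε₁, ⟨h₁, c₁⟩, l₁⟩ :=
    exists_lt_of_csInf_lt ⟨_, dist_mem_chainScales x y⟩ ((le_max_left _ _).trans_lt he)
  obtain ⟨ε₂, ⟨h₂, c₂⟩, l₂⟩ :=
    exists_lt_of_csInf_lt ⟨_, dist_mem_chainScales y z⟩ ((le_max_right _ _).trans_lt he)
  exact csInf_le (bddBelow_chainScales x z) ⟨h₁.trans l₁.le,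
    Relation.ReflTransGen.trans
      (Relation.ReflTransGen.mono (fun _ _ hab => le_trans hab l₁.le) _ _ c₁)
      (Relation.ReflTransGen.mono (fun _ _ hab => le_trans hab l₂.le) _ _ c₂)⟩

/-- A chain with steps shorter than the gap between `A` and its complement cannot leave `A`. -/
lemma mem_of_chain {A : Set M} {δ ε : ℝ} (hA : ∀ a ∈ A, ∀ b ∈ Aᶜ, δ ≤ dist a b) (hε : ε < δ)
    {x y : M} (hx : x ∈ A) (hc : Relation.ReflTransGen (fun a b : M => dist a b ≤ ε) x y) :
    y ∈ A := by
  induction hc with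
  | refl => exact hx
  | tail _ hab ih =>
    by_contra hb
    exact absurd (hA _ ih _ hb) (not_le.2 (hab.trans_lt hε))

lemma dist_le_of_mem_chainScales {c₀ : ℝ} (hc₀ : 0 < c₀)
    (h : ∀ (x : M) (r : ℝ), 0 < r → ∃ A : Set M, IsClosed A ∧
        Metric.closedBall x (c₀ * r) ⊆ A ∧ A ⊆ Metric.closedBall x r ∧
        ∀ a ∈ A, ∀ b ∈ Aᶜ, c₀ * r ≤ dist a b)
    {x y : M} {ε : ℝ} (hε : ε ∈ chainScales x y) : c₀ / 2 * dist x y ≤ ε := by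
  by_contra! hlt
  have hd : 0 < dist x y := pos_of_mul_pos_right (hε.1.trans_lt hlt) (by positivity)
  obtain ⟨A, -, hxA, hAr, hsep⟩ := h x (dist x y / 2) (by positivity)
  have hy := hAr (mem_of_chain hsep (by linarith)
    (hxA (Metric.mem_closedBall_self (by positivity))) hε.2)
  rw [Metric.mem_closedBall, dist_comm] at hy
  linarith

end

/-- A uniformly disconnected metric space admits an equivalent ultrametric:
there are `ρ' : M → M → ℝ` and `K ≥ 1` such that `ρ'` is an ultrametric and
`K⁻¹ ρ' ≤ ρ ≤ K ρ'`. -/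
theorem uniformly_disconnected_iff_ultrametric (M : Type*) [MetricSpace M]
    (c₀ : ℝ) (hc₀ : c₀ ∈ Set.Ioo (0 : ℝ) 1)
    (h : ∀ (x : M) (r : ℝ), 0 < r → ∃ A : Set M, IsClosed A ∧
        Metric.closedBall x (c₀ * r) ⊆ A ∧ A ⊆ Metric.closedBall x r ∧
        ∀ a ∈ A, ∀ b ∈ Aᶜ, c₀ * r ≤ dist a b) :
    ∃ (ρ' : M → M → ℝ) (K : ℝ), 1 ≤ K ∧
      (∀ x : M, ρ' x x = 0) ∧
      (∀ x y : M, ρ' x y = ρ' y x) ∧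
      (∀ x y z : M, ρ' x z ≤ max (ρ' x y) (ρ' y z)) ∧
      (∀ x y : M, K⁻¹ * ρ' x y ≤ dist x y ∧ dist x y ≤ K * ρ' x y) := by
  obtain ⟨hpos, hlt⟩ := hc₀
  have hK : 1 ≤ 2 / c₀ := by
    rw [le_div_iff₀ hpos]
    linarith
  refine ⟨chainDist, 2 / c₀, hK, fun x => ?_, chainDist_comm, chainDist_le_max,
    fun x y => ⟨?_, ?_⟩⟩
  · exact le_antisymm ((chainDist_le_dist x x).trans_eq (dist_self x)) (chainDist_nonneg x x)
  · exact (mul_le_of_le_one_left (chainDist_nonneg x y) (inv_le_one_of_one_le₀ hK)).trans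
      (chainDist_le_dist x y)
  · have hle : c₀ / 2 * dist x y ≤ chainDist x y :=
      le_csInf ⟨_, dist_mem_chainScales x y⟩ fun _ hε => dist_le_of_mem_chainScales hpos h hε
    calc dist x y = 2 / c₀ * (c₀ / 2 * dist x y) := by field_simp
      _ ≤ 2 / c₀ * chainDist x y := by gcongr
end
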